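/- Let F be drawn from SSBM(N,K,p,q) conditional on a community assignment matrix Y, and let B be an r-homogeneous measurement matrix with pairwise disjoint rows b_1,…,b_M that is CO-1 with respect to Y, so that each profile vector a_i = b_i Yᵀ is supported on a single community, giving a profile vector x ∈ [K]^M with x_i the unique community in supp(a_i). Then the entries {C_{ij} : i > j} of C = B F Bᵀ are mutually independent, with C_{ij} ~ Binomial(r², p) if x_i = x_j and C_{ij} ~ Binomial(r², q) if x_i ≠ x_j. -/

import Mathlib

open MeasureTheory ProbabilityTheory
open scoped ENNReal NNReal

/-- Law (on `ℕ`, via the indicator `true ↦ 1`) of a Bernoulli random variable with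
success probability `p`. -/
noncomputable def bernNat (p : ℝ≥0∞) (hp : p ≤ 1) : PMF ℕ :=
  (PMF.ofFintype (fun b : Bool => cond b p (1 - p)) (by simp [hp])).map fun b => if b then 1 else 0

/-- Law of the sum of `n` independent copies of an `ℕ`-valued random variable with law `μ`. -/
noncomputable def iidSum (μ : PMF ℕ) : ℕ → PMF ℕ
  | 0 => PMF.pure 0
  | n + 1 => (iidSum μ n).bind fun s => μ.map fun x => s + x

/-- The binomial law `Binomial(n,p)` on `ℕ`: the law of the sum of `n` independent
Bernoulli(`p`) random variables. -/
noncomputable def binomialNat (p : ℝ≥0∞) (hp : p ≤ 1) (n : ℕ) : PMF ℕ :=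
  iidSum (bernNat p hp) n

/-!
Since `B` has entries in `{0, 1}`, `C_{ij}` is the sum of `F_{uv}` over `u ∈ supp b_i` and
`v ∈ supp b_j`. For `i ≠ j` these supports are disjoint, so by symmetry of `F` each term is one of
the independent entries above the diagonal, indexed by an unordered pair with one node in either
support, and such a pair determines `{i, j}`. Distinct entries of `C` are therefore sums over
disjoint sets of independent variables. The CO-1 property makes all terms of `C_{ij}` identically
distributed, so `C_{ij}` has the law of a sum of `|supp b_i| |supp b_j|` i.i.d. variables.
-/

section IIDSum

lemma toMeasure_bind_map_add {α : Type*} [AddMonoid α] [Countable α] [MeasurableSpace α]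
    [DiscreteMeasurableSpace α] (P Q : PMF α) :
    (P.bind fun s => Q.map fun x => s + x).toMeasure = P.toMeasure ∗ Q.toMeasure := by
  ext t ht
  rw [PMF.toMeasure_bind_apply _ _ _ ht, Measure.conv, Measure.map_apply measurable_add ht,
    Measure.prod_apply (measurable_add ht), lintegral_countable']
  refine tsum_congr fun a => ?_
  rw [PMF.toMeasure_apply_singleton _ _ (measurableSet_singleton a), mul_comm,
    PMF.toMeasure_map_apply _ _ _ (measurable_const_add a) ht]
  rfl

lemma map_sum_eq_iidSum {Ω ι : Type*} [MeasurableSpace Ω] {μ : Measure Ω} {X : ι → Ω → ℕ}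
    (hindep : iIndepFun X μ) (hmeas : ∀ i, Measurable (X i)) {P : PMF ℕ} (s : Finset ι)
    (hlaw : ∀ i ∈ s, μ.map (X i) = P.toMeasure) :
    μ.map (∑ i ∈ s, X i) = (iidSum P s.card).toMeasure := by
  classical
  have := hindep.isProbabilityMeasure
  induction s using Finset.induction_on with
  | empty =>
    rw [Finset.sum_empty, Finset.card_empty, iidSum, PMF.toMeasure_pure]
    exact (Measure.map_const μ 0).trans (by simp)
  | insert i s hi ih =>
    rw [Finset.forall_mem_insert] at hlaw
    calc μ.map (∑ j ∈ insert i s, X j) = μ.map (∑ j ∈ s, X j + X i) := by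
          rw [Finset.sum_insert hi, add_comm]
      _ = μ.map (∑ j ∈ s, X j) ∗ μ.map (X i) :=
          (hindep.indepFun_finsetSum_of_notMem hmeas hi).map_add_eq_map_conv_map
            (by fun_prop) (hmeas i)
      _ = (iidSum P s.card).toMeasure ∗ P.toMeasure := by rw [ih hlaw.2, hlaw.1]
      _ = (iidSum P (insert i s).card).toMeasure := by
          rw [← toMeasure_bind_map_add, Finset.card_insert_of_notMem hi, iidSum]

end IIDSum

section DisjointBlocks

variable {Ω ι κ : Type*}

lemma iIndep_biSup_of_pairwise_disjoint {m : ι → MeasurableSpace Ω} {mΩ : MeasurableSpace Ω}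
    {μ : Measure Ω} (hle : ∀ i, m i ≤ mΩ) (hindep : iIndep m μ) {T : κ → Set ι}
    (hT : Pairwise (Function.onFun Disjoint T)) :
    iIndep (fun a => ⨆ i ∈ T a, m i) μ := by
  classical
  have := hindep.isProbabilityMeasure
  rw [iIndep_iff]
  intro s
  induction s using Finset.induction_on with
  | empty => simp
  | insert a s ha ih =>
    intro A hA
    rw [Finset.forall_mem_insert] at hA
    rw [Finset.prod_insert ha, Finset.set_biInter_insert, ← ih hA.2]
    have hdisj : Disjoint (T a) (⋃ b ∈ s, T b) :=
      Set.disjoint_iUnion₂_right.2 fun b hb => hT (ne_of_mem_of_not_mem hb ha).symm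
    refine (Indep_iff _ _ μ).1 (indep_iSup_of_disjoint hle hindep hdisj) _ _ hA.1 ?_
    refine Finset.measurableSet_biInter s fun b hb => ?_
    exact (biSup_mono fun i hi => Set.mem_biUnion (Finset.mem_coe.2 hb) hi :
      ⨆ i ∈ T b, m i ≤ _) _ (hA.2 b hb)

lemma iIndepFun_sum_of_pairwise_disjoint {R : Type*} [AddCommMonoid R] [MeasurableSpace R]
    [MeasurableAdd₂ R] [MeasurableSpace Ω] {μ : Measure Ω} {X : ι → Ω → R}
    (hindep : iIndepFun X μ) (hmeas : ∀ i, Measurable (X i)) {T : κ → Finset ι}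
    (hT : Pairwise (Function.onFun Disjoint T)) :
    iIndepFun (fun a ω => ∑ i ∈ T a, X i ω) μ := by
  have hblocks := iIndep_biSup_of_pairwise_disjoint (T := fun a => (T a : Set ι))
    (fun i => (hmeas i).comap_le) hindep.iIndep fun _ _ hab => Finset.disjoint_coe.2 (hT hab)
  rw [iIndepFun_iff_iIndep, iIndep_iff]
  rw [iIndep_iff] at hblocks
  refine fun s A hA => hblocks s fun a ha => Measurable.comap_le ?_ _ (hA a ha)
  exact Finset.measurable_sum (T a) fun i hi => Measurable.of_comap_le (le_iSup₂_of_le i hi le_rfl)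

end DisjointBlocks

section CrossPairs

/-- The unordered pairs of distinct nodes, each encoded by its increasing representative. These
index the entries of a symmetric matrix above the diagonal. -/
abbrev IncreasingPair (V : Type*) [LT V] : Type _ := {e : V × V // e.1 < e.2}

variable {V : Type*} [LinearOrder V]

/-- The unordered pairs with one node in `S` and the other in `T`. They are the potential edges
between two disjoint sets of nodes `S` and `T`. -/
def crossPairs (S T : Finset V) : Finset (IncreasingPair V) :=
  (S ×ˢ T ∪ T ×ˢ S).subtype fun e => e.1 < e.2

lemma mem_crossPairs {S T : Finset V} {e : IncreasingPair V} :
    e ∈ crossPairs S T ↔ (e.1.1 ∈ S ∧ e.1.2 ∈ T) ∨ (e.1.2 ∈ S ∧ e.1.1 ∈ T) := by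
  simp [crossPairs, and_comm]

lemma sum_crossPairs {R : Type*} [AddCommMonoid R] {S T : Finset V} (hST : Disjoint S T)
    {f : V → V → R} (hf : ∀ u v, f u v = f v u) :
    ∑ e ∈ crossPairs S T, f e.1.1 e.1.2 = ∑ u ∈ S, ∑ v ∈ T, f u v := by
  have hdisj : Disjoint ((S ×ˢ T).filter fun e => e.1 < e.2)
      ((T ×ˢ S).filter fun e => e.1 < e.2) :=
    Finset.disjoint_filter_filter (Finset.disjoint_product.2 (Or.inl hST))
  have hswap : ∑ e ∈ T ×ˢ S with e.1 < e.2, f e.1 e.2 =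
      ∑ e ∈ S ×ˢ T with ¬e.1 < e.2, f e.1 e.2 := by
    refine Finset.sum_equiv (Equiv.prodComm V V) (fun e => ?_) fun e _ => hf _ _
    have : e.1 ∈ T → e.2 ∈ S → e.1 ≠ e.2 := fun hT hS =>
      (Finset.disjoint_iff_ne.1 hST _ hS _ hT).symm
    grind
  calc ∑ e ∈ crossPairs S T, f e.1.1 e.1.2
      = ∑ e ∈ S ×ˢ T ∪ T ×ˢ S with e.1 < e.2, f e.1 e.2 :=
        Finset.sum_subtype_eq_sum_filter fun e : V × V => f e.1 e.2
    _ = ∑ e ∈ S ×ˢ T with e.1 < e.2, f e.1 e.2 + ∑ e ∈ T ×ˢ S with e.1 < e.2, f e.1 e.2 := by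
        rw [Finset.filter_union, Finset.sum_union hdisj]
    _ = ∑ e ∈ S ×ˢ T, f e.1 e.2 := by rw [hswap, Finset.sum_filter_add_sum_filter_not]
    _ = ∑ u ∈ S, ∑ v ∈ T, f u v := Finset.sum_product' ..

lemma card_crossPairs {S T : Finset V} (hST : Disjoint S T) :
    (crossPairs S T).card = S.card * T.card := by
  simpa using sum_crossPairs hST (f := fun _ _ => (1 : ℕ)) fun _ _ => rfl

lemma pairwise_disjoint_crossPairs {I : Type*} [Preorder I] {S : I → Finset V}
    (hS : Pairwise (Function.onFun Disjoint S)) :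
    Pairwise (Function.onFun Disjoint
      fun a : {a : I × I // a.2 < a.1} => crossPairs (S a.1.1) (S a.1.2)) := by
  have eq_of_mem {i j : I} {u : V} (hi : u ∈ S i) (hj : u ∈ S j) : i = j :=
    hS.eq (Finset.not_disjoint_iff.2 ⟨u, hi, hj⟩)
  rintro ⟨⟨i, j⟩, hji⟩ ⟨⟨k, l⟩, hlk⟩ hne
  refine Finset.disjoint_left.2 fun e hij hkl => hne ?_
  rw [mem_crossPairs] at hij hkl
  -- A common pair forces `{i, j} = {k, l}`; `i = l`, `j = k` would contradict `j < i` and `l < k`.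
  have : ¬(i = l ∧ j = k) := by
    rintro ⟨rfl, rfl⟩
    exact hji.not_gt hlk
  grind

end CrossPairs

section BlockSums

variable {V Ω : Type*} [LinearOrder V] [MeasurableSpace Ω] {μ : Measure Ω}

lemma iIndepFun_blockSum {I R : Type*} [Preorder I] [AddCommMonoid R] [MeasurableSpace R]
    [MeasurableAdd₂ R] {F : Ω → Matrix V V R} (hmeas : ∀ u v, Measurable fun ω => F ω u v)
    (hsymm : ∀ ω u v, F ω u v = F ω v u)
    (hindep : iIndepFun (fun (e : IncreasingPair V) ω => F ω e.1.1 e.1.2) μ)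
    {S : I → Finset V} (hS : Pairwise (Function.onFun Disjoint S)) :
    iIndepFun (fun (a : {a : I × I // a.2 < a.1}) ω =>
      ∑ u ∈ S a.1.1, ∑ v ∈ S a.1.2, F ω u v) μ := by
  have hsums := iIndepFun_sum_of_pairwise_disjoint hindep (fun e => hmeas e.1.1 e.1.2)
    (pairwise_disjoint_crossPairs hS)
  simpa only [fun (a : {a : I × I // a.2 < a.1}) ω =>
    sum_crossPairs (hS a.2.ne') (hsymm ω)] using hsums

lemma map_blockSum {F : Ω → Matrix V V ℕ} (hmeas : ∀ u v, Measurable fun ω => F ω u v)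
    (hsymm : ∀ ω u v, F ω u v = F ω v u)
    (hindep : iIndepFun (fun (e : IncreasingPair V) ω => F ω e.1.1 e.1.2) μ)
    {S T : Finset V} (hST : Disjoint S T) {P : PMF ℕ}
    (hlaw : ∀ u ∈ S, ∀ v ∈ T, μ.map (fun ω => F ω u v) = P.toMeasure) :
    μ.map (fun ω => ∑ u ∈ S, ∑ v ∈ T, F ω u v) = (iidSum P (S.card * T.card)).toMeasure := by
  have hlaw' : ∀ e ∈ crossPairs S T, μ.map (fun ω => F ω e.1.1 e.1.2) = P.toMeasure := by
    intro e he
    rcases mem_crossPairs.1 he with ⟨hS, hT⟩ | ⟨hS, hT⟩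
    · exact hlaw _ hS _ hT
    · simpa only [hsymm _ e.1.1] using hlaw _ hS _ hT
  rw [← card_crossPairs hST,
    ← map_sum_eq_iidSum hindep (fun e => hmeas e.1.1 e.1.2) (crossPairs S T) hlaw']
  congr 1 with ω
  rw [Finset.sum_apply, sum_crossPairs hST (hsymm ω)]

end BlockSums

section Measurement

variable {V I κ : Type*}

lemma exists_common_community_iff {R : Type*} [One R] {Y : Matrix κ V R}
    (hY : ∀ u, ∃! k, Y k u = 1) {k l : κ} {u v : V} (hu : Y k u = 1) (hv : Y l v = 1) :
    (∃ m, Y m u = 1 ∧ Y m v = 1) ↔ k = l := by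
  constructor
  · rintro ⟨m, hmu, hmv⟩
    exact ((hY u).unique hu hmu).trans ((hY v).unique hmv hv)
  · rintro rfl
    exact ⟨k, hu, hv⟩

variable [Fintype V]

/-- The support of the row `b_i` of the measurement matrix `B`: the nodes that it groups. -/
def rowSupport {R : Type*} [Zero R] [DecidableEq R] (B : Matrix I V R) (i : I) : Finset V :=
  Finset.univ.filter fun u => B i u ≠ 0

lemma mem_rowSupport {R : Type*} [Zero R] [DecidableEq R] {B : Matrix I V R} {i : I} {u : V} :
    u ∈ rowSupport B i ↔ B i u ≠ 0 := by
  simp [rowSupport]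

lemma pairwise_disjoint_rowSupport {R : Type*} [MulZeroClass R] [NoZeroDivisors R] [DecidableEq R]
    {B : Matrix I V R} (hB : ∀ i j, i ≠ j → ∀ u, B i u * B j u = 0) :
    Pairwise (Function.onFun Disjoint (rowSupport B)) :=
  fun i j hij => Finset.disjoint_left.2 fun u hi hj =>
    mul_ne_zero (mem_rowSupport.1 hi) (mem_rowSupport.1 hj) (hB i j hij u)

lemma mul_mul_transpose_apply_eq_blockSum {R : Type*} [NonAssocSemiring R] [DecidableEq R]
    {B : Matrix I V R} (hB : ∀ i u, B i u = 0 ∨ B i u = 1) (A : Matrix V V R) (i j : I) :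
    (B * A * B.transpose) i j = ∑ u ∈ rowSupport B i, ∑ v ∈ rowSupport B j, A u v := by
  have hterm (u v : V) : B i u * A u v * B j v =
      if B i u ≠ 0 then if B j v ≠ 0 then A u v else 0 else 0 := by
    split_ifs with hu hv
    · rw [(hB i u).resolve_left hu, (hB j v).resolve_left hv, one_mul, mul_one]
    · rw [not_not.1 hv, mul_zero]
    · rw [not_not.1 hu, zero_mul, zero_mul]
  calc (B * A * B.transpose) i j = ∑ v, ∑ u, B i u * A u v * B j v := by
        simp only [Matrix.mul_apply, Matrix.transpose_apply, Finset.sum_mul]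
    _ = ∑ u, ∑ v, B i u * A u v * B j v := Finset.sum_comm
    _ = ∑ u ∈ rowSupport B i, ∑ v ∈ rowSupport B j, A u v := by
        simp_rw [hterm, rowSupport, Finset.sum_filter, Finset.sum_ite_irrel, Finset.sum_const_zero]

lemma eq_one_of_mem_rowSupport {Y : Matrix κ V ℕ} (hY : ∀ u, ∃! k, Y k u = 1)
    {B : Matrix I V ℕ} {i : I} {k : κ} (hprofile : ∀ l, (B * Y.transpose) i l ≠ 0 → l = k)
    {u : V} (hu : u ∈ rowSupport B i) : Y k u = 1 := by
  obtain ⟨l, hl, -⟩ := hY u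
  have hne : (B * Y.transpose) i l ≠ 0 := by
    have hterm : B i u * Y l u ≠ 0 := by simpa [hl] using mem_rowSupport.1 hu
    rw [Matrix.mul_apply]
    exact fun h => hterm (Finset.sum_eq_zero_iff.1 h u (Finset.mem_univ u))
  exact hprofile l hne ▸ hl

end Measurement

theorem coarsened_SSBM_CO1_entries_indep_binomial_general
    {V I κ : Type*} [Fintype V] [LinearOrder V] [Preorder I] [DecidableEq κ] (P Q : PMF ℕ)
    (Y : Matrix κ V ℕ) [∀ u v, Decidable (∃ k, Y k u = 1 ∧ Y k v = 1)]
    (hYcol : ∀ u, ∃! k, Y k u = 1)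
    (B : Matrix I V ℕ)
    (hB01 : ∀ i u, B i u = 0 ∨ B i u = 1)
    (hBdisj : ∀ i j, i ≠ j → ∀ u, B i u * B j u = 0)
    (x : I → κ)
    (hCO1 : ∀ i k, (B * Y.transpose) i k ≠ 0 → k = x i)
    {Ω : Type*} [MeasurableSpace Ω] (μ : Measure Ω)
    (F : Ω → Matrix V V ℕ)
    (hFmeas : ∀ u v, Measurable fun ω => F ω u v)
    (hFsymm : ∀ ω u v, F ω u v = F ω v u)
    (hFindep : iIndepFun (fun (e : IncreasingPair V) ω => F ω e.1.1 e.1.2) μ)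
    (hFlaw : ∀ u v : V, u < v →
      μ.map (fun ω => F ω u v) = (if ∃ k, Y k u = 1 ∧ Y k v = 1 then P else Q).toMeasure) :
    iIndepFun
        (fun (e : {e : I × I // e.2 < e.1}) ω => (B * F ω * B.transpose) e.1.1 e.1.2) μ ∧
      ∀ i j : I, j < i →
        μ.map (fun ω => (B * F ω * B.transpose) i j) =
          (iidSum (if x i = x j then P else Q)
            ((rowSupport B i).card * (rowSupport B j).card)).toMeasure := by
  simp only [mul_mul_transpose_apply_eq_blockSum hB01]
  have hdisj := pairwise_disjoint_rowSupport hBdisj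
  refine ⟨iIndepFun_blockSum hFmeas hFsymm hFindep hdisj, fun i j hji => ?_⟩
  refine map_blockSum hFmeas hFsymm hFindep (hdisj hji.ne') fun u hu v hv => ?_
  have hYu : Y (x i) u = 1 := eq_one_of_mem_rowSupport hYcol (hCO1 i) hu
  have hYv : Y (x j) v = 1 := eq_one_of_mem_rowSupport hYcol (hCO1 j) hv
  rcases lt_or_gt_of_ne (Finset.disjoint_iff_ne.1 (hdisj hji.ne') u hu v hv) with huv | hvu
  · simp only [hFlaw u v huv, exists_common_community_iff hYcol hYu hYv]
  · simp only [hFsymm _ u, hFlaw v u hvu, exists_common_community_iff hYcol hYv hYu, eq_comm]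

/-- If `F ~ SSBM(N,K,p,q)` conditional on `Y` and `B` is an `r`-homogeneous
measurement matrix with pairwise disjoint rows which is CO-1 with respect to `Y` (each profile
vector `a_i = b_i Yᵀ` is supported on the single community `x_i`), then the entries `C_{ij}`,
`i > j`, of `C = B F Bᵀ` are mutually independent, with `C_{ij} ~ Binomial(r², p)` when
`x_i = x_j` and `C_{ij} ~ Binomial(r², q)` otherwise. -/
theorem coarsened_SSBM_CO1_entries_indep_binomial
    {N K M r : ℕ} (hr : 0 < r) (hrM : r * M ≤ N)
    (p q : ℝ≥0∞) (hp : p ≤ 1) (hq : q ≤ 1)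
    -- the community assignment matrix `Y`
    (Y : Matrix (Fin K) (Fin N) ℕ)
    (hY01 : ∀ k u, Y k u = 0 ∨ Y k u = 1)
    (hYcol : ∀ u, ∃! k, Y k u = 1)
    -- the measurement matrix `B`, with pairwise disjoint `r`-homogeneous rows
    (B : Matrix (Fin M) (Fin N) ℕ)
    (hB01 : ∀ i u, B i u = 0 ∨ B i u = 1)
    (hBdisj : ∀ i j, i ≠ j → ∀ u, B i u * B j u = 0)
    (hBhom : ∀ i, (Finset.univ.filter fun u => B i u ≠ 0).card = r)
    -- `B` is CO-1 with respect to `Y`, with profile vector `x`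
    (hCO1 : ∀ i, ∃! k, (B * Y.transpose) i k ≠ 0)
    (x : Fin M → Fin K)
    (hx : ∀ i, (B * Y.transpose) i (x i) ≠ 0)
    -- the random adjacency matrix `F`, drawn from `SSBM(N,K,p,q)` conditional on `Y`
    {Ω : Type*} [MeasurableSpace Ω] (μ : Measure Ω) [IsProbabilityMeasure μ]
    (F : Ω → Matrix (Fin N) (Fin N) ℕ)
    (hFmeas : ∀ u v, Measurable fun ω => F ω u v)
    (hFsymm : ∀ ω u v, F ω u v = F ω v u)
    (hFdiag : ∀ ω u, F ω u u = 0)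
    (hF01 : ∀ ω u v, F ω u v = 0 ∨ F ω u v = 1)
    (hFindep : iIndepFun
      (fun (e : {e : Fin N × Fin N // e.1 < e.2}) ω => F ω e.1.1 e.1.2) μ)
    (hFlaw : ∀ u v : Fin N, u < v →
      μ.map (fun ω => F ω u v) =
        (if ∃ k, Y k u = 1 ∧ Y k v = 1 then bernNat p hp else bernNat q hq).toMeasure) :
    -- conclusion: the entries `C_{ij}`, `i > j`, of `C = B F Bᵀ` are mutually independent …
    iIndepFun
        (fun (e : {e : Fin M × Fin M // e.2 < e.1}) ω =>
          (B * F ω * B.transpose) e.1.1 e.1.2) μ ∧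
      -- … with `C_{ij} ~ Binomial(r², p)` if `x_i = x_j`, and `C_{ij} ~ Binomial(r², q)` else
      ∀ i j : Fin M, j < i →
        μ.map (fun ω => (B * F ω * B.transpose) i j) =
          (if x i = x j then binomialNat p hp (r ^ 2)
            else binomialNat q hq (r ^ 2)).toMeasure := by
  simpa only [apply_ite (iidSum · (r ^ 2)), binomialNat, rowSupport, hBhom, ← sq] using
    coarsened_SSBM_CO1_entries_indep_binomial_general (bernNat p hp) (bernNat q hq) Y hYcol B hB01
      hBdisj x (fun i _ hk => (hCO1 i).unique hk (hx i)) μ F hFmeas hFsymm hFindep hFlaw
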